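/- Let ϖ be a primary prime in O_K, let k ∈ O_K, and let ϖ^h be the largest power of ϖ dividing k (with h = ∞ if k = 0). Then for any integer l ≥ 1: g(k, ϖ^l) = 0 if l ≤ h and l is odd; g(k, ϖ^l) = φ_{[i]}(ϖ^l) if l ≤ h and l is even; g(k, ϖ^l) = −N(ϖ)^{l−1} if l = h+1 is even; g(k, ϖ^l) = (i·k·ϖ^{−h} / ϖ) · N(ϖ)^{l−1/2} if l = h+1 is odd; and g(k, ϖ^l) = 0 if l ≥ h+2. -/

import Mathlib

open Complex Real Filter Topology
open scoped BigOperators Classical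

noncomputable section

/-- The norm `N(n)` of a Gaussian integer, as a real number. -/
def Nm (n : GaussianInt) : ℝ := ((Zsqrtd.norm n : ℤ) : ℝ)

/-- The element `1 + i` of `ℤ[i]`. -/
def ωg : GaussianInt := ⟨1, 1⟩

/-- The element `i` of `ℤ[i]`. -/
def ig : GaussianInt := ⟨0, 1⟩

/-- `n` is primary: `n ≡ 1 mod (1+i)³`. -/
def IsPrimary (n : GaussianInt) : Prop := ωg ^ 3 ∣ (n - 1)

/-- `ẽ(z) = exp(2πi(z/(2i) − z̄/(2i)))`. -/
def eT (z : ℂ) : ℂ :=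
  Complex.exp (2 * (Real.pi : ℂ) * Complex.I *
    (z / (2 * Complex.I) - (starRingEnd ℂ) z / (2 * Complex.I)))

/-- `χ a n = (a/n)` is the quadratic residue symbol of `ℤ[i]`: on odd primes `ϖ` it is
the `±1` (or `0`) value determined by `(a/ϖ) ≡ a^((N(ϖ)-1)/2) mod ϖ`, it is extended
multiplicatively in the denominator over odd elements, and equals `1` on units. -/
structure IsQuadSym (χ : GaussianInt → GaussianInt → ℤ) : Prop where
  val_prime : ∀ ϖ a : GaussianInt, Prime ϖ → ¬ ωg ∣ ϖ → ¬ ϖ ∣ a →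
    (χ a ϖ = 1 ∨ χ a ϖ = -1) ∧
      ϖ ∣ (a ^ (((Zsqrtd.norm ϖ).toNat - 1) / 2) - (χ a ϖ : GaussianInt))
  zero_of_dvd : ∀ ϖ a : GaussianInt, Prime ϖ → ϖ ∣ a → χ a ϖ = 0
  mul_den : ∀ a m n : GaussianInt, ¬ ωg ∣ m → ¬ ωg ∣ n → χ a (m * n) = χ a m * χ a n
  unit_den : ∀ a u : GaussianInt, IsUnit u → χ a u = 1

/-- `L s m = L(s, χ_m)`: the Hecke `L`-function attached to the quadratic symbol `(m/·)`,
given by its Dirichlet series over primary elements (= odd ideals) for `Re s > 1`,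
and analytic away from `s = 1`. -/
def IsHeckeL (χ : GaussianInt → GaussianInt → ℤ) (L : ℂ → GaussianInt → ℂ) : Prop :=
  (∀ (m : GaussianInt) (s : ℂ), 1 < s.re →
      L s m = ∑' n : {n : GaussianInt // IsPrimary n}, (χ m n.1 : ℂ) / (Nm n.1 : ℂ) ^ s) ∧
    ∀ m : GaussianInt, DifferentiableOn ℂ (fun s => L s m) {s : ℂ | s ≠ 1}

/-- The generalized Riemann hypothesis for the family of quadratic Hecke `L`-functions. -/
def GRHfor (L : ℂ → GaussianInt → ℂ) : Prop :=
  ∀ m : GaussianInt, m ≠ 0 → ∀ s : ℂ, 0 < s.re → s.re < 1 → L s m = 0 → s.re = 1 / 2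

/-- The absolute norm of an ideal of `ℤ[i]`, as a complex number. -/
def idN (I : Ideal GaussianInt) : ℂ := (Nat.card (GaussianInt ⧸ I) : ℂ)

/-- The Dedekind zeta function of `ℚ(i)`. -/
def IsDedekindZetaK (Z : ℂ → ℂ) : Prop :=
  (∀ s : ℂ, 1 < s.re → Z s = ∑' I : {I : Ideal GaussianInt // I ≠ ⊥}, idN I.1 ^ (-s)) ∧
    DifferentiableOn ℂ Z {s : ℂ | s ≠ 1}

/-- `ζ_K^{(2)}`: the Euler product of `ζ_K` with the factor at the prime `(1+i)` omitted. -/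
def zeta2 (Z : ℂ → ℂ) (s : ℂ) : ℂ := Z s * (1 - (2 : ℂ) ^ (-s))

/-- `P(z) = ∏_ϖ (1 + ((N(ϖ)^{z-1/2} − 1)(N(ϖ) + 1))⁻¹)`, over all primes of `ℤ[i]`. -/
def Pfun (z : ℂ) : ℂ :=
  ∏' I : {I : Ideal GaussianInt // I ≠ ⊥ ∧ I.IsPrime},
    (1 + 1 / ((idN I.1 ^ (z - 1 / 2) - 1) * (idN I.1 + 1)))

/-- The Euler product over odd primes appearing in the ratios-conjecture main term. -/
def ratioEuler (α β : ℂ) : ℂ :=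
  ∏' I : {I : Ideal GaussianInt // I ≠ ⊥ ∧ I.IsPrime ∧ (2 : GaussianInt) ∉ I},
    (1 + (idN I.1 ^ (α - β) - 1) / (idN I.1 ^ (1 + α - β) * (idN I.1 ^ (1 + α + β) - 1)))

/-- `g r n` is the quadratic Gauss sum `g(r,n) = ∑_{x mod n} (x/n) ẽ(rx/n)`:
for any complete residue system `S` modulo `n` it is given by the indicated finite sum. -/
def IsGaussSum (χ : GaussianInt → GaussianInt → ℤ) (g : GaussianInt → GaussianInt → ℂ) : Prop :=
  ∀ r n : GaussianInt, n ≠ 0 → ∀ S : Finset GaussianInt,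
    (∀ z : GaussianInt, ∃! x, x ∈ S ∧ n ∣ (z - x)) →
    g r n = ∑ x ∈ S, (χ x n : ℂ) * eT (GaussianInt.toComplex (r * x) / GaussianInt.toComplex n)

/-- A Dirichlet character modulo `q` on `ℤ[i]` (extended by zero). -/
def IsDirichletChar (q : GaussianInt) (χ : GaussianInt → ℂ) : Prop :=
  χ 1 = 1 ∧ (∀ a b : GaussianInt, χ (a * b) = χ a * χ b) ∧
    (∀ a b : GaussianInt, q ∣ (a - b) → χ a = χ b) ∧
    (∀ a : GaussianInt, IsCoprime a q → ‖χ a‖ = 1) ∧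
    (∀ a : GaussianInt, ¬ IsCoprime a q → χ a = 0)

/-- The Gauss sum `g(r,χ) = ∑_{x mod q} χ(x) ẽ(rx/q)` of a Dirichlet character modulo `q`. -/
def IsGaussSumChar (q : GaussianInt) (χ : GaussianInt → ℂ) (g : GaussianInt → ℂ) : Prop :=
  ∀ r : GaussianInt, ∀ S : Finset GaussianInt,
    (∀ z : GaussianInt, ∃! x, x ∈ S ∧ q ∣ (z - x)) →
    g r = ∑ x ∈ S, χ x * eT (GaussianInt.toComplex (r * x) / GaussianInt.toComplex q)

/-- A primary `n = a + bi` is of type 1 if `a ≡ 1, b ≡ 0 (mod 4)` (else it is of type 2). -/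
def IsTypeOne (n : GaussianInt) : Prop := n.re % 4 = 1 ∧ n.im % 4 = 0

/-- `ψ₁`, the principal character modulo `2` on `ℤ[i]`. -/
def psi1 (m : GaussianInt) : ℂ := if IsCoprime m 2 then 1 else 0

/-- `ψ₂`, the primitive quadratic character modulo `2` on `ℤ[i]`:
`ψ₂(m) = 1` for `m ≡ 1 (mod 2)`, `ψ₂(m) = −1` for `m ≡ i (mod 2)`, and `0` otherwise. -/
def psi2 (m : GaussianInt) : ℂ :=
  if (2 : GaussianInt) ∣ (m - 1) then 1 else if (2 : GaussianInt) ∣ (m - ig) then -1 else 0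

/-- `χ̃_n = ψ_j · (·/n)`, where `j` is the type of the primary element `n`. -/
def tchi (χ : GaussianInt → GaussianInt → ℤ) (n m : GaussianInt) : ℂ :=
  (if IsTypeOne n then psi1 m else psi2 m) * (χ m n : ℂ)

/-- `φ_{[i]}(n)`: the number of elements of `(ℤ[i]/(n))ˣ`. -/
def phiG (n : GaussianInt) : ℕ := Nat.card ((GaussianInt ⧸ Ideal.span {n})ˣ)

/-!
The symbol `(·/ϖ^l)` is the `l`-th power of the quadratic character `η` of the residue field
`ℤ[i]/(ϖ)`, pulled back to `ℤ[i]/(ϖ^l)`, so `g(k, ϖ^l)` is a Gauss sum over that ring.  Its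
additive character `x ↦ ẽ(kx/ϖ^l)` is trivial if `ϖ^l ∣ k`, factors through the residue field if
`ϖ^(l-1) ∣ k`, and is otherwise nontrivial on the kernel of the reduction to the residue field,
which forces the sum to vanish.

In the middle case everything reduces to `g(1, ϖ) = η(i) √N(ϖ)`, including the sign.  For rational
`ϖ` the sum `∑ ẽ(x²/ϖ)` is computed in the coordinates `x = u + iv`.  Otherwise `ℤ[i]/(ϖ)` is
`ℤ/p` with `p = N(ϖ) ≡ 1 mod 4`, the additive character `x ↦ ẽ(ix/ϖ)` becomes that of `ℤ/p` scaled
by `Re ϖ`, and `Re ϖ` is a square modulo `p` by Jacobi reciprocity.  There remains the classical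
quadratic Gauss sum modulo `p`, an instance of the Landsberg–Schaar identity, which follows from
the functional equation of the theta function by letting the argument tend to a rational cusp.
-/

section LandsbergSchaar

/-- The quadratic exponential sum `∑ exp(π i a n² / b)` over `0 ≤ n < b`.  When `a * b` is even,
the summand only depends on `n` modulo `b`. -/
def quadExpSum (a : ℤ) (b : ℕ) : ℂ :=
  ∑ n ∈ Finset.range b, cexp (π * I * a * n ^ 2 / b)

lemma ofReal_mul_cpow {r : ℝ} (hr : 0 ≤ r) (x y : ℂ) :
    ((r : ℂ) * x) ^ y = (r : ℂ) ^ y * x ^ y := by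
  rcases eq_or_ne y 0 with rfl | hy
  · simp
  rcases hr.eq_or_lt with rfl | hr
  · simp [hy]
  rcases eq_or_ne x 0 with rfl | hx
  · simp [hy]
  have hr0 : (r : ℂ) ≠ 0 := ofReal_ne_zero.mpr hr.ne'
  rw [cpow_def_of_ne_zero (mul_ne_zero hr0 hx), cpow_def_of_ne_zero hr0, cpow_def_of_ne_zero hx,
    log_ofReal_mul hr hx, ofReal_log hr.le, add_mul, Complex.exp_add]

lemma tendsto_jacobiTheta₂_ofReal {ι : Type*} {l : Filter ι} (x : ℝ)
    {τ : ι → ℂ} (hτ : Tendsto (fun i ↦ (τ i).im) l atTop) :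
    Tendsto (fun i ↦ jacobiTheta₂ x (τ i)) l (𝓝 1) := by
  have norm_term (n : ℤ) (i : ι) :
      ‖jacobiTheta₂_term n x (τ i)‖ = rexp (-(π * n ^ 2 * (τ i).im)) := by
    simp [norm_jacobiTheta₂_term]
  have term_tendsto (n : ℤ) : Tendsto (fun i ↦ jacobiTheta₂_term n x (τ i)) l
      (𝓝 (if n = 0 then 1 else 0)) := by
    split_ifs with hn
    · simpa [jacobiTheta₂_term, hn] using tendsto_const_nhds
    · rw [tendsto_zero_iff_norm_tendsto_zero]
      simp_rw [norm_term]
      exact tendsto_exp_neg_atTop_nhds_zero.comp (hτ.const_mul_atTop (by positivity))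
  have bound_summable : Summable fun n : ℤ ↦ rexp (-(π * n ^ 2)) := by
    simpa using summable_pow_mul_jacobiTheta₂_term_bound 0 one_pos 0
  rw [← tsum_ite_eq (0 : ℤ) (fun _ ↦ (1 : ℂ))]
  refine tendsto_tsum_of_dominated_convergence bound_summable term_tendsto ?_
  filter_upwards [hτ.eventually_ge_atTop 1] with i hi n
  rw [norm_term, Real.exp_le_exp, neg_le_neg_iff]
  exact le_mul_of_one_le_right (by positivity) hi

lemma tsum_exp_neg_pi_mul_residue_sq (s : ℝ) {b : ℝ} (hb : b ≠ 0) {w : ℂ} (hw : 0 < w.re) :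
    ∑' m : ℤ, cexp (-π * w * (m * b + s) ^ 2) =
      (1 / (w * b ^ 2)) ^ (1 / 2 : ℂ) * jacobiTheta₂ ((s / b : ℝ) : ℂ) (I / (w * b ^ 2)) := by
  have hw0 : w ≠ 0 := fun h ↦ by simp [h] at hw
  have hb0 : (b : ℂ) ≠ 0 := ofReal_ne_zero.mpr hb
  have base : -I * (I / (w * b ^ 2)) = 1 / (w * b ^ 2) := by
    rw [← mul_div_assoc, neg_mul, I_mul_I, neg_neg]
  have root_ne_zero : (1 / (w * b ^ 2) : ℂ) ^ (1 / 2 : ℂ) ≠ 0 := by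
    simp [cpow_eq_zero_iff, hw0, hb0]
  rw [← jacobiTheta₂_neg_left, jacobiTheta₂_functional_equation, base, mul_assoc, ← mul_assoc,
    mul_one_div_cancel root_ne_zero, one_mul, jacobiTheta₂, ← tsum_mul_left]
  refine tsum_congr fun m ↦ ?_
  rw [jacobiTheta₂_term, ← Complex.exp_add]
  congr 1
  push_cast
  field_simp
  ring

lemma cpow_half_mul_one_div_mul_sq {b : ℝ} (hb : 0 < b) {w : ℂ} (hw : 0 < w.re) :
    w ^ (1 / 2 : ℂ) * (1 / (w * b ^ 2)) ^ (1 / 2 : ℂ) = 1 / b := by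
  have hw0 : w ≠ 0 := fun h ↦ by simp [h] at hw
  have harg : w.arg ≠ π := fun h ↦ by
    linarith [(arg_eq_pi_iff.mp h).1]
  have hroot : ((b ^ 2)⁻¹ : ℝ) ^ (1 / 2 : ℝ) = b⁻¹ := by
    rw [← inv_pow, ← Real.sqrt_eq_rpow, Real.sqrt_sq (by positivity)]
  have hsplit : 1 / (w * b ^ 2) = (((b ^ 2)⁻¹ : ℝ) : ℂ) * w⁻¹ := by
    push_cast
    rw [one_div, mul_inv_rev]
  rw [hsplit, ofReal_mul_cpow (by positivity), inv_cpow _ _ harg,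
    mul_left_comm, mul_inv_cancel₀ (by simp [cpow_eq_zero_iff, hw0]), mul_one, one_div (b : ℂ),
    ← ofReal_inv, ← hroot, ofReal_cpow (by positivity)]
  norm_num

lemma re_pos_of_inv_re_pos {w : ℂ} (hw : 0 < w⁻¹.re) : 0 < w.re := by
  rw [inv_re] at hw
  exact (div_pos_iff_of_pos_right (normSq_pos.mpr fun h ↦ by simp [h] at hw)).mp hw

lemma tendsto_cpow_half_mul_tsum_residue {ι : Type*} {l : Filter ι}
    (s : ℝ) {b : ℝ} (hb : 0 < b) {w : ι → ℂ}
    (hw : Tendsto (fun i ↦ (w i)⁻¹.re) l atTop) :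
    Tendsto (fun i ↦ w i ^ (1 / 2 : ℂ) * ∑' m : ℤ, cexp (-π * w i * (m * b + s) ^ 2)) l
      (𝓝 (1 / b)) := by
  have him (i : ι) : (I / (w i * b ^ 2)).im = (b ^ 2)⁻¹ * (w i)⁻¹.re := by
    rw [div_eq_mul_inv, mul_inv, I_mul_im, mul_comm (w i)⁻¹, ← ofReal_pow, ← ofReal_inv,
      re_ofReal_mul]
  have htheta : Tendsto (fun i ↦ jacobiTheta₂ ((s / b : ℝ) : ℂ) (I / (w i * b ^ 2))) l (𝓝 1) :=
    tendsto_jacobiTheta₂_ofReal _ (by simpa only [him] using hw.const_mul_atTop (by positivity))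
  rw [← mul_one (1 / (b : ℂ))]
  refine (htheta.const_mul (1 / (b : ℂ))).congr' ?_
  filter_upwards [hw.eventually_gt_atTop 0] with i hi
  rw [tsum_exp_neg_pi_mul_residue_sq s hb.ne' (re_pos_of_inv_re_pos hi), ← mul_assoc,
    cpow_half_mul_one_div_mul_sq hb (re_pos_of_inv_re_pos hi)]

lemma exp_pi_mul_residue_sq {a : ℤ} {b : ℕ} (hab : Even (a * b)) (hb : b ≠ 0) (m s : ℤ) :
    cexp (π * I * a * (m * b + s) ^ 2 / b) = cexp (π * I * a * s ^ 2 / b) := by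
  obtain ⟨c, hc⟩ := hab
  have hc' : (a : ℂ) * b = c + c := mod_cast hc
  have hb' : (b : ℂ) ≠ 0 := mod_cast hb
  rw [Complex.exp_eq_exp_iff_exists_int]
  refine ⟨c * m ^ 2 + a * m * s, ?_⟩
  push_cast
  field_simp
  linear_combination (m ^ 2 * b : ℂ) * hc'

lemma jacobiTheta_eq_sum_residues {a : ℤ} {b : ℕ} (hb : b ≠ 0) (hab : Even (a * b)) {w : ℂ}
    (hw : 0 < w.re) :
    jacobiTheta (a / b + I * w) = ∑ s ∈ Finset.range b,
      cexp (π * I * a * s ^ 2 / b) * ∑' m : ℤ, cexp (-π * w * (m * b + s) ^ 2) := by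
  have : NeZero b := ⟨hb⟩
  have him : 0 < ((a / b : ℂ) + I * w).im := by
    have : ((a / b : ℂ)).im = 0 := by
      rw [← ofReal_intCast, ← ofReal_natCast, ← ofReal_div, ofReal_im]
    simpa [this] using hw
  have hsum : Summable fun n : ℤ ↦ cexp (π * I * (n : ℂ) ^ 2 * (a / b + I * w)) := by
    simpa [jacobiTheta₂_term] using (summable_jacobiTheta₂_term_iff 0 _).mpr him
  let e : Fin b × ℤ ≃ ℤ := (Equiv.prodComm _ _).trans (Int.divModEquiv b).symm
  have hsum' : Summable fun p : Fin b × ℤ ↦ cexp (π * I * (e p : ℂ) ^ 2 * (a / b + I * w)) :=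
    hsum.comp_injective e.injective
  have hterm (s : Fin b) (m : ℤ) : cexp (π * I * (e (s, m) : ℂ) ^ 2 * (a / b + I * w)) =
      cexp (π * I * a * (s : ℕ) ^ 2 / b) * cexp (-π * w * (m * b + (s : ℕ)) ^ 2) := by
    have he : ((e (s, m) : ℤ) : ℂ) = m * b + (s : ℕ) := by simp [e, Int.divModEquiv]
    have hres := exp_pi_mul_residue_sq hab hb m (s : ℕ)
    rw [Int.cast_natCast] at hres
    rw [he, ← hres, ← Complex.exp_add]
    congr 1
    linear_combination (π * w * (m * b + (s : ℕ)) ^ 2 : ℂ) * I_sq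
  rw [jacobiTheta, ← e.tsum_eq, hsum'.tsum_prod, tsum_fintype, Finset.sum_range]
  simp only [hterm, tsum_mul_left]

lemma tendsto_cpow_half_mul_jacobiTheta {ι : Type*} {l : Filter ι}
    {a : ℤ} {b : ℕ} (hb : b ≠ 0) (hab : Even (a * b)) {w : ι → ℂ}
    (hw : Tendsto (fun i ↦ (w i)⁻¹.re) l atTop) :
    Tendsto (fun i ↦ w i ^ (1 / 2 : ℂ) * jacobiTheta (a / b + I * w i)) l
      (𝓝 (quadExpSum a b / b)) := by
  have hterm (s : ℕ) := (tendsto_cpow_half_mul_tsum_residue s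
    (Nat.cast_pos.mpr (Nat.pos_of_ne_zero hb)) hw).const_mul (cexp (π * I * a * s ^ 2 / b))
  have hlim := tendsto_finsetSum (Finset.range b) fun s _ ↦ hterm s
  simp only [mul_one_div, ← Finset.sum_div, ofReal_natCast] at hlim
  refine hlim.congr' ?_
  filter_upwards [hw.eventually_gt_atTop 0] with i hi
  rw [jacobiTheta_eq_sum_residues hb hab (re_pos_of_inv_re_pos hi), Finset.mul_sum]
  exact Finset.sum_congr rfl fun s _ ↦ mul_left_comm _ _ _

lemma jacobiTheta_neg_one_div {τ : ℂ} (hτ : τ ≠ 0) :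
    jacobiTheta (-1 / τ) = (-I * τ) ^ (1 / 2 : ℂ) * jacobiTheta τ := by
  have root_ne_zero : (-I * τ) ^ (1 / 2 : ℂ) ≠ 0 := by
    simp [cpow_eq_zero_iff, hτ]
  rw [jacobiTheta_eq_jacobiTheta₂, jacobiTheta_eq_jacobiTheta₂,
    jacobiTheta₂_functional_equation 0 τ, zero_div]
  simp only [ne_eq, OfNat.ofNat_ne_zero, not_false_eq_true, zero_pow, mul_zero, zero_div,
    Complex.exp_zero, mul_one]
  rw [← mul_assoc, mul_one_div_cancel root_ne_zero, one_mul]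

/-- The local parameter at the cusp `-b / a` corresponding to `t` at the cusp `a / b`: the map
`τ ↦ -1 / τ` sends `a / b + i t` to `-b / a + i (cuspDual a b t)`. -/
def cuspDual (a b t : ℝ) : ℂ := t * (b / (a * (a / b + I * t)))

lemma cuspDual_inv_re (a : ℝ) {b t : ℝ} (hb : b ≠ 0) (ht : t ≠ 0) :
    (cuspDual a b t)⁻¹.re = (a / b) ^ 2 * t⁻¹ := by
  have hb' : (b : ℂ) ≠ 0 := ofReal_ne_zero.mpr hb
  have ht' : (t : ℂ) ≠ 0 := ofReal_ne_zero.mpr ht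
  have : (cuspDual a b t)⁻¹ = ((a / b) ^ 2 * t⁻¹ : ℝ) + I * (a / b : ℝ) := by
    rw [cuspDual]
    push_cast
    field_simp
  rw [this, add_re, ofReal_re, I_mul_re, ofReal_im, neg_zero, add_zero]

lemma cusp_add_I_mul_ne_zero (r : ℝ) {t : ℝ} (ht : t ≠ 0) : (r : ℂ) + I * t ≠ 0 := fun h ↦ by
  simpa [ht] using congrArg im h

lemma neg_cusp_add_cuspDual {a b t : ℝ} (ha : a ≠ 0) (hb : b ≠ 0) (ht : t ≠ 0) :
    -b / a + I * cuspDual a b t = -1 / (a / b + I * t) := by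
  have ha' : (a : ℂ) ≠ 0 := ofReal_ne_zero.mpr ha
  have hb' : (b : ℂ) ≠ 0 := ofReal_ne_zero.mpr hb
  have hτ0 : (a / b + I * t : ℂ) ≠ 0 := mod_cast cusp_add_I_mul_ne_zero (a / b) ht
  have hbτ : b * (a / b + I * t : ℂ) = a + I * t * b := by
    field_simp
  rw [cuspDual]
  generalize (a / b + I * t : ℂ) = τ at *
  field_simp
  linear_combination -hbτ

lemma cpow_half_mul_jacobiTheta_cuspDual {a b t : ℝ} (ha : a ≠ 0) (hb : b ≠ 0) (ht : 0 < t) :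
    cuspDual a b t ^ (1 / 2 : ℂ) * jacobiTheta (-b / a + I * cuspDual a b t) =
      (b / (a * (a / b + I * t))) ^ (1 / 2 : ℂ) * (-I * (a / b + I * t)) ^ (1 / 2 : ℂ) *
        ((t : ℂ) ^ (1 / 2 : ℂ) * jacobiTheta (a / b + I * t)) := by
  have hτ0 : (a / b + I * t : ℂ) ≠ 0 := mod_cast cusp_add_I_mul_ne_zero (a / b) ht.ne'
  rw [neg_cusp_add_cuspDual ha hb ht.ne', jacobiTheta_neg_one_div hτ0, cuspDual,
    ofReal_mul_cpow ht.le]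
  ring

lemma tendsto_cusp_factor {a b : ℝ} (ha : 0 < a) (hb : 0 < b) :
    Tendsto (fun t : ℝ ↦ (b / (a * (a / b + I * t))) ^ (1 / 2 : ℂ) *
      (-I * (a / b + I * t)) ^ (1 / 2 : ℂ)) (𝓝 0) (𝓝 (b / a * (-I * (a / b)) ^ (1 / 2 : ℂ))) := by
  have ha' : (a : ℂ) ≠ 0 := ofReal_ne_zero.mpr ha.ne'
  have hb' : (b : ℂ) ≠ 0 := ofReal_ne_zero.mpr hb.ne'
  have hsq : (b / (a * (a / b)) : ℂ) = (b / a : ℝ) ^ 2 := by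
    push_cast
    field_simp
  have hroot : (b / (a * (a / b)) : ℂ) ^ (1 / 2 : ℂ) = b / a := by
    rw [hsq, one_div, sq_cpow_two_inv (by rw [ofReal_re]; positivity), ofReal_div]
  have hslit : (b / (a * (a / b)) : ℂ) ∈ slitPlane := by
    rw [hsq, ← ofReal_pow, ofReal_mem_slitPlane]
    positivity
  have hslit' : -I * (a / b : ℂ) ∈ slitPlane :=
    Or.inr (by rw [← ofReal_div]; simpa using ⟨ha.ne', hb.ne'⟩)
  have hτ : Tendsto (fun t : ℝ ↦ (a / b + I * t : ℂ)) (𝓝 0) (𝓝 (a / b)) := by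
    have : Continuous fun t : ℝ ↦ (a / b + I * t : ℂ) := by fun_prop
    simpa using this.tendsto 0
  rw [← hroot]
  exact ((tendsto_const_nhds.div (hτ.const_mul (a : ℂ)) (by simp [ha', hb'])).cpow
      tendsto_const_nhds hslit).mul
    ((hτ.const_mul (-I)).cpow tendsto_const_nhds hslit')

/-- Landsberg–Schaar: compare both sides of the functional equation of `jacobiTheta` as the argument
tends to the cusp `a / b`. -/
theorem quadExpSum_reciprocity {a b : ℕ} (ha : a ≠ 0) (hb : b ≠ 0) (hab : Even (a * b)) :
    quadExpSum (-b) a = (-I * (a / b)) ^ (1 / 2 : ℂ) * quadExpSum a b := by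
  have ha' : (a : ℝ) ≠ 0 := mod_cast ha
  have hb' : (b : ℝ) ≠ 0 := mod_cast hb
  have cusp : Tendsto (fun t : ℝ ↦ ((t : ℂ)⁻¹).re) (𝓝[>] 0) atTop := by
    simpa only [← ofReal_inv, ofReal_re] using tendsto_inv_nhdsGT_zero
  have dual_cusp : Tendsto (fun t ↦ (cuspDual a b t)⁻¹.re) (𝓝[>] 0) atTop := by
    refine (tendsto_inv_nhdsGT_zero.const_mul_atTop
      (show (0 : ℝ) < (a / b) ^ 2 by positivity)).congr' ?_
    filter_upwards [self_mem_nhdsWithin] with t ht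
    exact (cuspDual_inv_re a hb' (ne_of_gt ht)).symm
  have at_cusp := tendsto_cpow_half_mul_jacobiTheta (a := a) hb (mod_cast hab) cusp
  have at_dual_cusp := tendsto_cpow_half_mul_jacobiTheta (a := -b) ha
    (by rw [neg_mul, even_neg]; exact_mod_cast mul_comm a b ▸ hab) dual_cusp
  have factor := (tendsto_cusp_factor (a := a) (b := b) (by positivity) (by positivity)).mono_left
    (nhdsWithin_le_nhds (s := Set.Ioi 0))
  have transform : quadExpSum (-b) a / a =
      (b / a * (-I * (a / b)) ^ (1 / 2 : ℂ)) * (quadExpSum a b / b) := by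
    refine tendsto_nhds_unique (at_dual_cusp.congr' ?_) (factor.mul at_cusp)
    filter_upwards [self_mem_nhdsWithin] with t ht
    simpa using cpow_half_mul_jacobiTheta_cuspDual ha' hb' ht
  have ha0 : (a : ℂ) ≠ 0 := mod_cast ha
  have hb0 : (b : ℂ) ≠ 0 := mod_cast hb
  generalize (-I * (a / b) : ℂ) ^ (1 / 2 : ℂ) = root at transform ⊢
  field_simp at transform
  linear_combination transform

theorem quadExpSum_two {N : ℕ} (hN : N ≠ 0) :
    quadExpSum 2 N = (1 + I) / 2 * (1 + (-I) ^ N) * √N := by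
  have hsqrt : (√N : ℂ) ^ 2 = N := by rw [← ofReal_pow, Real.sq_sqrt N.cast_nonneg, ofReal_natCast]
  have hsqrt0 : (√N : ℂ) ≠ 0 := by simpa using hN
  have dual : quadExpSum (-N) 2 = 1 + (-I) ^ N := by
    have : π * I * ((-N : ℤ) : ℂ) * (1 : ℕ) ^ 2 / (2 : ℕ) = N * -(π / 2 * I) := by
      push_cast
      ring
    simp only [quadExpSum, Finset.sum_range_succ, Finset.sum_range_zero, this]
    rw [Complex.exp_nat_mul, Complex.exp_neg, exp_pi_div_two_mul_I, inv_I]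
    simp
  have root : (-I * ((2 : ℕ) / N)) ^ (1 / 2 : ℂ) = (1 - I) / √N := by
    have : -I * ((2 : ℕ) / N) = ((1 - I) / √N) ^ 2 := by
      rw [div_pow, hsqrt, sub_sq, I_sq]
      push_cast
      ring
    rw [this, one_div, sq_cpow_two_inv]
    rw [div_ofReal_re]
    simpa using Nat.pos_of_ne_zero hN
  have reciprocity := quadExpSum_reciprocity two_ne_zero hN (even_two.mul_right N)
  rw [dual, root, Nat.cast_two, div_mul_eq_mul_div, eq_div_iff hsqrt0] at reciprocity
  linear_combination -((1 + I) / 2) * reciprocity + quadExpSum 2 N / 2 * I_sq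

lemma quadExpSum_two_of_mod_four_eq_one {N : ℕ} (hN : N % 4 = 1) : quadExpSum 2 N = √N := by
  have hpow : (-I) ^ N = -I := by
    rw [← Nat.div_add_mod N 4, hN, pow_succ, pow_mul, neg_pow, I_pow_four]
    norm_num
  rw [quadExpSum_two (by lia), hpow]
  linear_combination -(√N : ℂ) / 2 * I_sq

end LandsbergSchaar

section GaussSums

open Finset

variable {R : Type*} [CommRing R]

lemma sum_mul_addChar_eq_zero_of_translation_invariant [IsDomain R] {G : Type*}
    [AddCommGroup G] [Fintype G] {f : G → R} {ψ : AddChar G R} {s : G}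
    (hf : ∀ x, f (x + s) = f x) (hs : ψ s ≠ 1) :
    ∑ x, f x * ψ x = 0 := by
  have htranslate : ∑ x, f x * ψ x = (∑ x, f x * ψ x) * ψ s := by
    rw [sum_mul, ← Equiv.sum_comp (Equiv.addRight s)]
    simp only [Equiv.coe_addRight, hf, AddChar.map_add_eq_mul, mul_assoc]
  have hprod : (∑ x, f x * ψ x) * (ψ s - 1) = 0 := by linear_combination -htranslate
  exact (mul_eq_zero.mp hprod).resolve_right (sub_ne_zero.mpr hs)

/-- If `F = K ⊕ Kj` with `j² ∈ K` and `ψ` is trivial on `K`, then `ψ((u + vj)²) = ψ(2uvj)`. -/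
lemma sum_addChar_sq_eq_card [IsDomain R] {K F : Type*} [CommRing K] [Fintype K] [CommRing F]
    [Fintype F] (ι : K →+* F) {j : F} {d : K} (hj : j ^ 2 = ι d) (h2 : IsUnit (2 : K))
    (hbasis : Function.Bijective fun w : K × K ↦ ι w.1 + ι w.2 * j)
    {ψ : AddChar F R} (hψ : ∀ u, ψ (ι u) = 1)
    {θ : AddChar K R} (hθ : θ.IsPrimitive) (hψθ : ∀ v, ψ (ι v * j) = θ v) :
    ∑ x, ψ (x ^ 2) = Fintype.card K := by
  have hsq (u v : K) : ψ ((ι u + ι v * j) ^ 2) = θ (v * (2 * u)) := by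
    have hexpand : (ι u + ι v * j) ^ 2 = ι (u ^ 2 + v ^ 2 * d) + ι (v * (2 * u)) * j := by
      simp only [map_add, map_mul, map_pow, map_ofNat, ← hj]
      ring
    rw [hexpand, AddChar.map_add_eq_mul, hψ, one_mul, hψθ]
  calc ∑ x, ψ (x ^ 2) = ∑ u : K, ∑ v : K, θ (v * (2 * u)) := by
        rw [← hbasis.sum_comp fun x ↦ ψ (x ^ 2), Fintype.sum_prod_type]
        simp only [hsq]
    _ = ∑ u : K, if u = 0 then (Fintype.card K : R) else 0 := by
        simp only [AddChar.sum_mulShift _ hθ, h2.mul_right_eq_zero, Nat.cast_ite, Nat.cast_zero]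
    _ = Fintype.card K := by simp only [sum_ite_eq', mem_univ, if_true]

/-- The quadratic character of a finite field `F`, taking its values `0, ±1` in the ring `R`. -/
def quadraticCharIn (F R : Type*) [Field F] [Fintype F] [CommRing R] : MulChar F R :=
  (quadraticChar F).ringHomComp (Int.castRingHom R)

section QuadraticChar

variable {F : Type*} [Field F] [Fintype F]

lemma quadraticCharIn_isQuadratic : (quadraticCharIn F R).IsQuadratic :=
  (quadraticChar_isQuadratic F).comp _

lemma quadraticCharIn_ne_one [CharZero R] (hF : ringChar F ≠ 2) : quadraticCharIn F R ≠ 1 :=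
  (MulChar.ringHomComp_ne_one_iff Int.cast_injective).mpr (quadraticChar_ne_one hF)

lemma quadraticCharIn_eq_one_of_isSquare {a : F} (ha : a ≠ 0) (hsq : IsSquare a) :
    quadraticCharIn F R a = 1 := by
  rw [quadraticCharIn, MulChar.ringHomComp_apply, (quadraticChar_one_iff_isSquare ha).mpr hsq,
    map_one]

lemma gaussSum_quadraticCharIn_mulShift (ψ : AddChar F R) {a : F} (ha : a ≠ 0) :
    gaussSum (quadraticCharIn F R) (ψ.mulShift a) =
      quadraticCharIn F R a * gaussSum (quadraticCharIn F R) ψ := by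
  simpa only [Units.val_mk0, quadraticCharIn_isQuadratic.inv] using
    gaussSum_mulShift_eq (quadraticCharIn F R) ψ (Units.mk0 a ha)

lemma gaussSum_quadraticCharIn_eq_sum_sq [IsDomain R] (hF : ringChar F ≠ 2) {ψ : AddChar F R}
    (hψ : ψ ≠ 1) :
    gaussSum (quadraticCharIn F R) ψ = ∑ x, ψ (x ^ 2) := by
  have hfiber (y : F) :
      ∑ x with x ^ 2 = y, ψ (x ^ 2) = quadraticCharIn F R y * ψ y + ψ y := by
    have hcard : (#{x : F | x ^ 2 = y} : R) = quadraticCharIn F R y + 1 := by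
      have hsqrts := quadraticChar_card_sqrts hF y
      rw [Set.toFinset_ofPred] at hsqrts
      rw [quadraticCharIn, MulChar.ringHomComp_apply, eq_intCast]
      exact_mod_cast congrArg (Int.cast : ℤ → R) hsqrts
    rw [sum_congr rfl fun x hx ↦ by rw [(mem_filter.mp hx).2], sum_const, nsmul_eq_mul, hcard,
      add_one_mul]
  rw [← sum_fiberwise univ (fun x : F ↦ x ^ 2), sum_congr rfl fun y _ ↦ hfiber y, sum_add_distrib,
    AddChar.sum_eq_zero_of_ne_one hψ, add_zero, gaussSum]

lemma gaussSum_quadraticCharIn_comp_ringEquiv {K : Type*} [Field K] [Fintype K] (e : K ≃+* F)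
    (ψ : AddChar F R) :
    gaussSum (quadraticCharIn K R) (ψ.compAddMonoidHom e) = gaussSum (quadraticCharIn F R) ψ := by
  have hη (y : K) : quadraticCharIn F R (e y) = quadraticCharIn K R y := by
    have hsq : IsSquare (e y) ↔ IsSquare y :=
      ⟨fun h ↦ by simpa using h.map e.symm, fun h ↦ h.map e⟩
    simp only [quadraticCharIn, MulChar.ringHomComp_apply, quadraticChar_apply, quadraticCharFun,
      map_eq_zero_iff e e.injective, hsq]
  rw [gaussSum, gaussSum, ← e.toEquiv.sum_comp]
  exact sum_congr rfl fun y _ ↦ congrArg (· * ψ (e y)) (hη y).symm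

end QuadraticChar

lemma quadraticCharIn_intCast {p : ℕ} [Fact p.Prime] (a : ℤ) :
    quadraticCharIn (ZMod p) R a = jacobiSym a p := by
  rw [← jacobiSym.legendreSym.to_jacobiSym, legendreSym, quadraticCharIn, MulChar.ringHomComp_apply,
    eq_intCast]
  congr!

section Pullback

variable {A B : Type*} [CommRing A] [CommRing B]

lemma sum_comp_eq_card_ker_mul_sum [Fintype A] [Fintype B] {f : A →+* B}
    (hf : Function.Surjective f) (g : B → R) :
    ∑ x, g (f x) = Nat.card (RingHom.ker f) * ∑ y, g y := by
  have hfiber (y : B) : #{x | f x = y} = Nat.card (RingHom.ker f) := by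
    rw [AddMonoidHom.card_fiber_eq_of_mem_range f (hf y) (hf 0), ← Fintype.card_subtype,
      ← Nat.card_eq_fintype_card]
    rfl
  rw [← sum_fiberwise univ f, mul_sum]
  refine sum_congr rfl fun y _ ↦ ?_
  rw [sum_congr rfl fun x hx ↦ by rw [(mem_filter.mp hx).2], sum_const, nsmul_eq_mul, hfiber]

/-- The pullback `χ ∘ f` of a multiplicative character along a local homomorphism `f`; locality
makes it vanish at the non-units. -/
def mulCharPullback (f : A →+* B) [IsLocalHom f] (χ : MulChar B R) : MulChar A R where
  toMonoidHom := χ.toMonoidHom.comp f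
  map_nonunit' _ ha := χ.map_nonunit fun hfa ↦ ha (isUnit_of_map_unit f _ hfa)

variable (f : A →+* B) [IsLocalHom f]

lemma mulCharPullback_apply (χ : MulChar B R) (a : A) : mulCharPullback f χ a = χ (f a) :=
  rfl

lemma mulCharPullback_one : mulCharPullback f (1 : MulChar B R) = 1 :=
  MulChar.ext fun a ↦ by
    rw [mulCharPullback_apply, MulChar.one_apply (a.isUnit.map f), MulChar.one_apply a.isUnit]

lemma mulCharPullback_ne_one {f : A →+* B} [IsLocalHom f] (hf : Function.Surjective f)
    {χ : MulChar B R} (hχ : χ ≠ 1) : mulCharPullback f χ ≠ 1 := by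
  obtain ⟨b, hb⟩ := MulChar.ne_one_iff.mp hχ
  obtain ⟨a, ha⟩ := hf b
  have hunit : IsUnit a := isUnit_of_map_unit f a (ha ▸ b.isUnit)
  refine MulChar.ne_one_iff.mpr ⟨hunit.unit, ?_⟩
  rwa [mulCharPullback_apply, hunit.unit_spec, ha]

lemma gaussSum_mulCharPullback [Fintype A] [Fintype B] {f : A →+* B} [IsLocalHom f]
    (hf : Function.Surjective f) (χ : MulChar B R) (ψ : AddChar B R) :
    gaussSum (mulCharPullback f χ) (ψ.compAddMonoidHom f) =
      Nat.card (RingHom.ker f) * gaussSum χ ψ :=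
  sum_comp_eq_card_ker_mul_sum hf fun y ↦ χ y * ψ y

end Pullback

end GaussSums

section GaussianResidues

lemma eT_eq_exp_im (z : ℂ) : eT z = exp (2 * π * I * z.im) := by
  rw [eT, ← sub_div, sub_conj]
  congr 2
  push_cast
  field_simp [I_ne_zero]

lemma eT_add (z w : ℂ) : eT (z + w) = eT z * eT w := by
  simp only [eT_eq_exp_im, ← Complex.exp_add, add_im]
  push_cast
  ring_nf

lemma eT_eq_one_iff {z : ℂ} : eT z = 1 ↔ ∃ m : ℤ, z.im = m := by
  rw [eT_eq_exp_im, Complex.exp_eq_one_iff]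
  refine exists_congr fun m ↦ ?_
  rw [mul_comm (m : ℂ), mul_right_inj' two_pi_I_ne_zero]
  norm_cast

lemma toComplex_ig : GaussianInt.toComplex ig = I := by
  simp [ig, GaussianInt.toComplex_def]

/-- A basis of the `ℤ`-module `ℤ[i]`, giving the coordinates `(re, im)`. -/
def gaussianIntBasis : Module.Basis (Fin 2) ℤ GaussianInt :=
  .ofEquivFun
    { toFun := fun z ↦ ![z.re, z.im]
      invFun := fun v ↦ ⟨v 0, v 1⟩
      left_inv := fun z ↦ by simp
      right_inv := fun v ↦ by ext i; fin_cases i <;> simp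
      map_add' := fun x y ↦ by ext i; fin_cases i <;> simp
      map_smul' := fun m x ↦ by ext i; fin_cases i <;> simp }

instance : Module.Free ℤ GaussianInt := .of_basis gaussianIntBasis

instance : Module.Finite ℤ GaussianInt := .of_basis gaussianIntBasis

lemma algebraNorm_gaussianInt (z : GaussianInt) : Algebra.norm ℤ z = z.norm := by
  rw [Algebra.norm_eq_matrix_det gaussianIntBasis, Matrix.det_fin_two]
  simp [Algebra.leftMulMatrix_eq_repr_mul, gaussianIntBasis, Zsqrtd.norm_def]

/-- The residue ring `ℤ[i]/(n)`. -/
abbrev Residue (n : GaussianInt) : Type := GaussianInt ⧸ Ideal.span {n}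

/-- The residue class map `ℤ[i] → ℤ[i]/(n)`. -/
abbrev residue (n : GaussianInt) : GaussianInt →+* Residue n := Ideal.Quotient.mk (Ideal.span {n})

lemma residue_eq_zero_iff {n x : GaussianInt} : residue n x = 0 ↔ n ∣ x :=
  Ideal.Quotient.eq_zero_iff_dvd n x

lemma residue_eq_residue_iff {n x y : GaussianInt} : residue n x = residue n y ↔ n ∣ x - y := by
  rw [← sub_eq_zero, ← map_sub, residue_eq_zero_iff]

lemma residue_surjective (n : GaussianInt) : Function.Surjective (residue n) :=
  Ideal.Quotient.mk_surjective

lemma natCard_residue (n : GaussianInt) : Nat.card (Residue n) = n.norm.natAbs := by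
  rw [← algebraNorm_gaussianInt, ← Ideal.absNorm_span_singleton, Ideal.absNorm_apply,
    Submodule.cardQuot_apply]

instance (n : GaussianInt) [NeZero n] : Finite (Residue n) := by
  refine Nat.finite_of_card_ne_zero ?_
  rw [natCard_residue, Int.natAbs_ne_zero, Ne, GaussianInt.norm_eq_zero]
  exact NeZero.ne n

instance (n : GaussianInt) [NeZero n] : Fintype (Residue n) := .ofFinite _

lemma card_residue (n : GaussianInt) [NeZero n] : Fintype.card (Residue n) = n.norm.natAbs := by
  rw [← Nat.card_eq_fintype_card, natCard_residue]

instance (ϖ : GaussianInt) [hϖ : Fact (Prime ϖ)] : NeZero ϖ := ⟨hϖ.out.ne_zero⟩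

instance (ϖ : GaussianInt) [hϖ : Fact (Prime ϖ)] : Field (Residue ϖ) :=
  haveI : (Ideal.span {ϖ}).IsMaximal :=
    PrincipalIdealRing.isMaximal_of_irreducible hϖ.out.irreducible
  Ideal.Quotient.field _

/-- The additive character `x ↦ ẽ(x/n)` of `ℤ[i]`. -/
def gaussianAddChar (n : GaussianInt) : AddChar GaussianInt ℂ where
  toFun x := eT (x / n)
  map_zero_eq_one' := by
    rw [map_zero, zero_div, eT_eq_one_iff]
    exact ⟨0, by simp⟩
  map_add_eq_mul' x y := by rw [map_add, add_div, eT_add]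

lemma gaussianAddChar_eq_one_of_dvd {n x : GaussianInt} (h : n ∣ x) : gaussianAddChar n x = 1 := by
  obtain ⟨y, rfl⟩ := h
  refine eT_eq_one_iff.mpr ?_
  rcases eq_or_ne n 0 with rfl | hn
  · exact ⟨0, by simp⟩
  · refine ⟨y.im, ?_⟩
    rw [map_mul, mul_div_cancel_left₀ _ (GaussianInt.toComplex_eq_zero.not.mpr hn),
      GaussianInt.intCast_im]

/-- The additive character `x ↦ ẽ(x/n)` of `ℤ[i]/(n)`. -/
def residueChar (n : GaussianInt) : AddChar (Residue n) ℂ :=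
  AddChar.toAddMonoidHomEquiv.symm <| QuotientAddGroup.lift (Ideal.span {n}).toAddSubgroup
    (AddChar.toAddMonoidHomEquiv (gaussianAddChar n))
    fun _ hx ↦ gaussianAddChar_eq_one_of_dvd (Ideal.mem_span_singleton.mp hx)

lemma residueChar_residue (n x : GaussianInt) : residueChar n (residue n x) = eT (x / n) :=
  rfl

lemma isPrimitive_residueChar {n : GaussianInt} (hn : n ≠ 0) : (residueChar n).IsPrimitive := by
  intro a ha hshift
  obtain ⟨x, rfl⟩ := residue_surjective n a
  have hchar (y : GaussianInt) : eT ((x * y : GaussianInt) / n) = 1 := by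
    rw [← residueChar_residue, map_mul, ← AddChar.mulShift_apply, hshift, AddChar.one_apply]
  obtain ⟨v, hv⟩ := eT_eq_one_iff.mp (hchar 1)
  obtain ⟨u, hu⟩ := eT_eq_one_iff.mp (hchar ig)
  rw [mul_one] at hv
  rw [mul_comm, map_mul, toComplex_ig, mul_div_assoc, I_mul_im] at hu
  have hquot : (x / n : ℂ) = GaussianInt.toComplex ⟨u, v⟩ := by
    apply Complex.ext
    · rw [hu, GaussianInt.re_toComplex]
    · rw [hv, GaussianInt.im_toComplex]
  refine ha (residue_eq_zero_iff.mpr ⟨⟨u, v⟩, GaussianInt.toComplex_injective ?_⟩)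
  rw [map_mul, ← hquot, mul_div_cancel₀ _ (GaussianInt.toComplex_eq_zero.not.mpr hn)]

/-- Reduction `ℤ[i]/(n) → ℤ[i]/(d)` for a divisor `d` of `n`. -/
abbrev residueReduction {d n : GaussianInt} (hdn : d ∣ n) : Residue n →+* Residue d :=
  Ideal.Quotient.factor (Ideal.span_singleton_le_span_singleton.mpr hdn)

lemma residueReduction_surjective {d n : GaussianInt} (hdn : d ∣ n) :
    Function.Surjective (residueReduction hdn) :=
  Ideal.Quotient.factor_surjective _

lemma natCard_ker_residueReduction {n m d : GaussianInt} [NeZero n] [NeZero d] (hn : n = m * d) :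
    Nat.card (RingHom.ker (residueReduction (Dvd.intro_left m hn.symm))) = m.norm.natAbs := by
  have hd : d.norm.natAbs ≠ 0 := card_residue d ▸ Fintype.card_ne_zero
  have hcard := sum_comp_eq_card_ker_mul_sum
    (residueReduction_surjective (Dvd.intro_left m hn.symm)) fun _ ↦ (1 : ℤ)
  simp only [Finset.sum_const, Finset.card_univ, nsmul_one, card_residue] at hcard
  refine Nat.eq_of_mul_eq_mul_right (Nat.pos_of_ne_zero hd) ?_
  calc Nat.card _ * d.norm.natAbs = n.norm.natAbs := mod_cast hcard.symm
    _ = m.norm.natAbs * d.norm.natAbs := by rw [hn, Zsqrtd.norm_mul, Int.natAbs_mul]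

lemma residueChar_mulShift_mul {n m d : GaussianInt} (hm : m ≠ 0) (hn : n = m * d)
    (k : GaussianInt) :
    (residueChar n).mulShift (residue n (m * k)) =
      ((residueChar d).mulShift (residue d k)).compAddMonoidHom
        (residueReduction (Dvd.intro_left m hn.symm)) := by
  ext q
  obtain ⟨x, rfl⟩ := residue_surjective _ q
  change residueChar n (residue n (m * k * x)) = residueChar d (residue d (k * x))
  rw [residueChar_residue, residueChar_residue, hn, mul_assoc, map_mul,
    map_mul GaussianInt.toComplex m d,
    mul_div_mul_left _ _ (GaussianInt.toComplex_eq_zero.not.mpr hm)]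

lemma IsGaussSum.eq_gaussSum {χ : GaussianInt → GaussianInt → ℤ}
    {g : GaussianInt → GaussianInt → ℂ} (hg : IsGaussSum χ g) {n : GaussianInt} [NeZero n]
    {X : MulChar (Residue n) ℂ} (hX : ∀ x, (χ x n : ℂ) = X (residue n x)) (k : GaussianInt) :
    g k n = gaussSum X ((residueChar n).mulShift (residue n k)) := by
  have hrep := Function.surjInv_eq (residue_surjective n)
  set rep := Function.surjInv (residue_surjective n)
  rw [hg k n (NeZero.ne n) (Finset.univ.image rep) ?_,
    Finset.sum_image (Function.injective_surjInv _).injOn, gaussSum]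
  · refine Finset.sum_congr rfl fun q _ ↦ ?_
    rw [hX, hrep, AddChar.mulShift_apply, ← residueChar_residue, map_mul, hrep]
  · intro z
    refine ⟨rep (residue n z), ⟨Finset.mem_image_of_mem _ (Finset.mem_univ _), ?_⟩, ?_⟩
    · rw [← residue_eq_residue_iff, hrep]
    · rintro y ⟨hy, hzy⟩
      obtain ⟨q, -, rfl⟩ := Finset.mem_image.mp hy
      rw [residue_eq_residue_iff.mpr hzy, hrep]

end GaussianResidues

section OddPrimes

lemma dvd_intCast_iff_norm_dvd {d : ℤ} {z : ℤ√d} (hz : IsCoprime z.re z.im) (m : ℤ) :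
    z ∣ (m : ℤ√d) ↔ z.norm ∣ m := by
  constructor
  · rintro ⟨y, hy⟩
    have hmul : (z.norm : ℤ√d) * y = m * star z := by
      rw [Zsqrtd.norm_eq_mul_conj, hy]
      ring
    have hre := congrArg Zsqrtd.re hmul
    have him := congrArg Zsqrtd.im hmul
    simp only [Zsqrtd.re_smul, Zsqrtd.im_smul, Zsqrtd.re_star, Zsqrtd.im_star] at hre him
    obtain ⟨u, v, huv⟩ := hz
    exact ⟨u * y.re - v * y.im, by linear_combination (-m) * huv - u * hre + v * him⟩
  · intro h
    refine dvd_trans ⟨star z, Zsqrtd.norm_eq_mul_conj z⟩ ((Zsqrtd.intCast_dvd_intCast _ _).mpr h)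

lemma isCoprime_re_im_of_irreducible {z : GaussianInt} (hz : Irreducible z) (hre : z.re ≠ 0)
    (him : z.im ≠ 0) : IsCoprime z.re z.im := by
  rw [Int.isCoprime_iff_gcd_eq_one]
  obtain ⟨a, ha⟩ := Int.gcd_dvd_left z.re z.im
  obtain ⟨b, hb⟩ := Int.gcd_dvd_right z.re z.im
  have hfactor : z = ((Int.gcd z.re z.im : ℤ) : GaussianInt) * ⟨a, b⟩ := by
    rw [Zsqrtd.smul_val]
    exact Zsqrtd.ext ha hb
  rcases hz.isUnit_or_isUnit hfactor with hunit | hunit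
  · rw [← Zsqrtd.norm_eq_one_iff, Zsqrtd.norm_intCast, Int.natAbs_mul] at hunit
    exact Nat.eq_one_of_mul_eq_one_left hunit
  · rw [← Zsqrtd.norm_eq_one_iff' (by norm_num), Zsqrtd.norm_def] at hunit
    have ha0 : 0 < a ^ 2 := sq_pos_of_ne_zero fun h ↦ hre (by rw [ha, h, mul_zero])
    have hb0 : 0 < b ^ 2 := sq_pos_of_ne_zero fun h ↦ him (by rw [hb, h, mul_zero])
    nlinarith

lemma odd_re_and_even_im {z : GaussianInt} (h : 2 ∣ z - 1) : Odd z.re ∧ Even z.im := by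
  have hdvd := (Zsqrtd.intCast_dvd 2 (z - 1)).mp (mod_cast h)
  simp only [Zsqrtd.re_sub, Zsqrtd.im_sub, Zsqrtd.re_one, Zsqrtd.im_one] at hdvd
  rw [Int.odd_iff, Int.even_iff]
  omega

lemma norm_emod_four_eq_one {z : GaussianInt} (h : 2 ∣ z - 1) : z.norm % 4 = 1 := by
  obtain ⟨⟨a, ha⟩, ⟨b, hb⟩⟩ := odd_re_and_even_im h
  have hnorm : z.norm = 4 * (a ^ 2 + a + b ^ 2) + 1 := by
    rw [Zsqrtd.norm_def, ha, hb]
    ring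
  omega

lemma natAbs_norm_mod_four_eq_one {z : GaussianInt} (h : 2 ∣ z - 1) : z.norm.natAbs % 4 = 1 := by
  have := norm_emod_four_eq_one h
  have := GaussianInt.norm_nonneg z
  omega

lemma not_ωg_dvd {z : GaussianInt} (h : 2 ∣ z - 1) : ¬ ωg ∣ z := by
  rintro ⟨y, rfl⟩
  have := norm_emod_four_eq_one h
  rw [Zsqrtd.norm_mul, show ωg.norm = 2 from rfl] at this
  omega

lemma two_dvd_sub_one_of_isPrimary {z : GaussianInt} (h : IsPrimary z) : 2 ∣ z - 1 :=
  dvd_trans ⟨⟨-1, 1⟩, by decide⟩ h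

lemma isUnit_ig : IsUnit ig := .of_mul_eq_one ⟨0, -1⟩ (by decide)

lemma ringChar_residue_ne_two {ϖ : GaussianInt} [Fact (Prime ϖ)] (h : 2 ∣ ϖ - 1) :
    ringChar (Residue ϖ) ≠ 2 := by
  intro hchar
  have := FiniteField.even_card_of_char_two hchar
  have := natAbs_norm_mod_four_eq_one h
  rw [← card_residue] at this
  omega

lemma jacobiSym_eq_one_of_eq_sq_add_sq {a b : ℤ} (ha : Odd a) (hb : Even b) (hab : IsCoprime a b)
    {n : ℕ} (hn : (n : ℤ) = a ^ 2 + b ^ 2) : jacobiSym a n = 1 := by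
  have hn4 : n % 4 = 1 := by
    obtain ⟨c, rfl⟩ := ha
    obtain ⟨d, rfl⟩ := hb
    have : (n : ℤ) = 4 * (c ^ 2 + c + d ^ 2) + 1 := by rw [hn]; ring
    omega
  have hpos : jacobiSym (a.natAbs : ℤ) n = 1 := by
    have hmod : (n : ℤ) ≡ b ^ 2 [ZMOD a.natAbs] :=
      (Int.modEq_iff_dvd.mpr (Int.natAbs_dvd.mpr ⟨a, by rw [hn]; ring⟩)).symm
    rw [← jacobiSym.quadratic_reciprocity_one_mod_four hn4 (Int.natAbs_odd.mpr ha),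
      jacobiSym.mod_left, hmod, ← jacobiSym.mod_left]
    apply jacobiSym.sq_one'
    simpa only [Int.gcd, Int.natAbs_natCast] using Int.isCoprime_iff_gcd_eq_one.mp hab.symm
  rcases Int.natAbs_eq a with h | h
  · rw [h, hpos]
  · rw [h, jacobiSym.neg _ (Nat.odd_iff.mpr (by omega)), hpos, ZMod.χ₄_nat_one_mod_four hn4,
      mul_one]

lemma sum_stdAddChar_sq (N : ℕ) [NeZero N] :
    ∑ y : ZMod N, ZMod.stdAddChar (y ^ 2) = quadExpSum 2 N := by
  rw [quadExpSum]
  refine Finset.sum_nbij' ZMod.val Nat.cast ?_ ?_ ?_ ?_ ?_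
  · exact fun y _ ↦ Finset.mem_range.mpr y.val_lt
  · exact fun _ _ ↦ Finset.mem_univ _
  · exact fun y _ ↦ ZMod.natCast_zmod_val y
  · exact fun n hn ↦ ZMod.val_cast_of_lt (Finset.mem_range.mp hn)
  · intro y _
    have hy : y ^ 2 = ((y.val ^ 2 : ℤ) : ZMod N) := by simp
    rw [hy, ZMod.stdAddChar_coe]
    push_cast
    ring_nf

lemma gaussSum_stdAddChar {p : ℕ} [Fact p.Prime] (hp : p % 4 = 1) :
    gaussSum (quadraticCharIn (ZMod p) ℂ) ZMod.stdAddChar = √p := by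
  have hchar : ringChar (ZMod p) ≠ 2 := by
    rw [ZMod.ringChar_zmod_n]
    omega
  have hstd : (ZMod.stdAddChar : AddChar (ZMod p) ℂ) ≠ 1 := by
    simpa only [AddChar.mulShift_one] using ZMod.isPrimitive_stdAddChar p one_ne_zero
  rw [gaussSum_quadraticCharIn_eq_sum_sq hchar hstd, sum_stdAddChar_sq,
    quadExpSum_two_of_mod_four_eq_one hp]

lemma charP_residue_of_isCoprime {n : GaussianInt} (hn : IsCoprime n.re n.im) :
    CharP (Residue n) n.norm.natAbs where
  cast_eq_zero_iff m := by
    rw [← map_natCast (residue n), residue_eq_zero_iff, ← Int.natCast_dvd_natCast,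
      GaussianInt.abs_natCast_norm, ← dvd_intCast_iff_norm_dvd hn, Int.cast_natCast]

lemma charP_residue_intCast (a : ℤ) : CharP (Residue (a : GaussianInt)) a.natAbs where
  cast_eq_zero_iff m := by
    rw [← map_natCast (residue a), residue_eq_zero_iff, ← Int.natCast_dvd_natCast,
      Int.natAbs_dvd, ← Zsqrtd.intCast_dvd_intCast (d := -1), Int.cast_natCast]

lemma residueChar_intCast_eq_one_iff {a : ℤ} (ha : a ≠ 0) {y : GaussianInt} :
    residueChar (a : GaussianInt) (residue a y) = 1 ↔ a ∣ y.im := by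
  rw [residueChar_residue, eT_eq_one_iff, map_intCast, ← ofReal_intCast, div_ofReal_im,
    ← GaussianInt.intCast_im]
  refine exists_congr fun m ↦ ?_
  rw [div_eq_iff (Int.cast_ne_zero.mpr ha), mul_comm]
  norm_cast

/-- In the coordinates `u + iv` of `ℤ[i]/(a) = ℤ/a ⊕ i(ℤ/a)`, the additive character is trivial on
`ℤ/a`. -/
lemma sum_residueChar_sq_intCast {a : ℤ} (ha : Odd a) [NeZero (a : GaussianInt)] :
    ∑ x, residueChar (a : GaussianInt) (x ^ 2) = a.natAbs := by
  have ha0 : a ≠ 0 := by rintro rfl; simp at ha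
  have : NeZero a.natAbs := ⟨Int.natAbs_ne_zero.mpr ha0⟩
  have := charP_residue_intCast a
  set ι := ZMod.castHom dvd_rfl (Residue (a : GaussianInt))
  have hι (m : ℤ) : ι m = residue a m := by rw [map_intCast, map_intCast]
  let θ : AddChar (ZMod a.natAbs) ℂ :=
    ((residueChar (a : GaussianInt)).mulShift (residue a ig)).compAddMonoidHom ι
  have hθ (v : ZMod a.natAbs) : θ v = residueChar (a : GaussianInt) (residue a ig * ι v) := rfl
  have hprim : θ.IsPrimitive := by
    refine AddChar.zmod_char_primitive_of_eq_one_only_at_zero _ θ fun v hv ↦ ?_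
    obtain ⟨m, rfl⟩ := ZMod.intCast_surjective v
    rw [hθ, hι, ← map_mul, residueChar_intCast_eq_one_iff ha0] at hv
    rw [ZMod.intCast_zmod_eq_zero_iff_dvd, Int.natAbs_dvd]
    simpa [ig] using hv
  have hbasis : Function.Bijective fun w : ZMod a.natAbs × ZMod a.natAbs ↦
      ι w.1 + ι w.2 * residue a ig := by
    rw [Fintype.bijective_iff_surjective_and_card]
    refine ⟨fun x ↦ ?_, ?_⟩
    · obtain ⟨z, rfl⟩ := residue_surjective _ x
      refine ⟨(z.re, z.im), ?_⟩
      simp only [hι, ← map_mul, ← map_add]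
      congr 1
      ext <;> simp [ig]
    · rw [Fintype.card_prod, ZMod.card, card_residue, Zsqrtd.norm_intCast, Int.natAbs_mul]
  have h2 : IsUnit (2 : ZMod a.natAbs) :=
    (ZMod.isUnit_iff_coprime 2 _).mpr (Nat.coprime_two_left.mpr (Int.natAbs_odd.mpr ha))
  have hj : residue (a : GaussianInt) ig ^ 2 = ι (-1) := by
    rw [← map_pow, show ig ^ 2 = -1 by decide, map_neg, map_neg, map_one, map_one]
  have hone (u : ZMod a.natAbs) : residueChar (a : GaussianInt) (ι u) = 1 := by
    obtain ⟨m, rfl⟩ := ZMod.intCast_surjective u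
    rw [hι, residueChar_intCast_eq_one_iff ha0, Zsqrtd.im_intCast]
    exact dvd_zero a
  rw [sum_addChar_sq_eq_card ι hj h2 hbasis hone hprim fun v ↦ by rw [hθ, mul_comm], ZMod.card]

lemma residue_ig_ne_zero (ϖ : GaussianInt) [Fact (Prime ϖ)] : residue ϖ ig ≠ 0 :=
  (isUnit_ig.map (residue ϖ)).ne_zero

lemma residueChar_mulShift_ig_comp {n : GaussianInt} {N : ℕ} [NeZero N] (hN : n.norm = N)
    (ι : ZMod N →+* Residue n) :
    ((residueChar n).mulShift (residue n ig)).compAddMonoidHom ι.toAddMonoidHom =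
      ZMod.stdAddChar.mulShift (n.re : ZMod N) := by
  ext y
  obtain ⟨m, rfl⟩ := ZMod.intCast_surjective y
  have hι : ι m = residue n m := by rw [map_intCast, map_intCast]
  have him : (I * m / GaussianInt.toComplex n).im = n.re * m / N := by
    rw [mul_div_assoc, I_mul_im, div_eq_mul_inv, ← ofReal_intCast, re_ofReal_mul, inv_re,
      ← GaussianInt.intCast_real_norm, ← GaussianInt.intCast_re, hN, Int.cast_natCast]
    ring
  rw [AddChar.mulShift_apply, ← Int.cast_mul, ZMod.stdAddChar_coe]
  change residueChar n (residue n ig * ι m) = _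
  rw [hι, ← map_mul, residueChar_residue, eT_eq_exp_im, map_mul, toComplex_ig, map_intCast, him]
  push_cast
  ring_nf

lemma gaussSum_residueChar_mulShift_ig {ϖ : GaussianInt} [Fact (Prime ϖ)] (h : 2 ∣ ϖ - 1)
    (hϖ : IsCoprime ϖ.re ϖ.im) :
    gaussSum (quadraticCharIn (Residue ϖ) ℂ) ((residueChar ϖ).mulShift (residue ϖ ig)) =
      (√(Nm ϖ) : ℝ) := by
  obtain ⟨p, hp⟩ : ∃ p : ℕ, p = ϖ.norm.natAbs := ⟨_, rfl⟩
  have hnorm : ϖ.norm = p := by rw [hp, GaussianInt.abs_natCast_norm]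
  have hp4 : p % 4 = 1 := hp ▸ natAbs_norm_mod_four_eq_one h
  have : CharP (Residue ϖ) p := hp ▸ charP_residue_of_isCoprime hϖ
  have : Fact p.Prime := ⟨(CharP.char_is_prime_or_zero (Residue ϖ) p).resolve_right (by omega)⟩
  let e := ZMod.ringEquiv (Residue ϖ) (hp ▸ card_residue ϖ)
  obtain ⟨hodd, heven⟩ := odd_re_and_even_im h
  have hre : quadraticCharIn (ZMod p) ℂ ϖ.re = 1 := by
    have hsum : (p : ℤ) = ϖ.re ^ 2 + ϖ.im ^ 2 := by rw [← hnorm, Zsqrtd.norm_def]; ring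
    rw [quadraticCharIn_intCast, jacobiSym_eq_one_of_eq_sq_add_sq hodd heven hϖ hsum, Int.cast_one]
  have hre0 : (ϖ.re : ZMod p) ≠ 0 := fun h0 ↦ by
    rw [h0, MulChar.map_zero] at hre
    exact zero_ne_one hre
  rw [← gaussSum_quadraticCharIn_comp_ringEquiv e]
  change gaussSum _ (((residueChar ϖ).mulShift (residue ϖ ig)).compAddMonoidHom
    (e : ZMod p →+* Residue ϖ).toAddMonoidHom) = _
  rw [residueChar_mulShift_ig_comp hnorm, gaussSum_quadraticCharIn_mulShift _ hre0, hre, one_mul,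
    gaussSum_stdAddChar hp4, Nm, hnorm, Int.cast_natCast]

lemma gaussSum_residueChar_of_isCoprime {ϖ : GaussianInt} [Fact (Prime ϖ)] (h : 2 ∣ ϖ - 1)
    (hϖ : IsCoprime ϖ.re ϖ.im) :
    gaussSum (quadraticCharIn (Residue ϖ) ℂ) (residueChar ϖ) =
      quadraticCharIn (Residue ϖ) ℂ (residue ϖ ig) * (√(Nm ϖ) : ℝ) := by
  have hi := residue_ig_ne_zero ϖ
  have hη : quadraticCharIn (Residue ϖ) ℂ (residue ϖ ig) ^ 2 = 1 := by
    rw [← MulChar.pow_apply' _ two_ne_zero, quadraticCharIn_isQuadratic.sq_eq_one,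
      MulChar.one_apply hi.isUnit]
  rw [← gaussSum_residueChar_mulShift_ig h hϖ, gaussSum_quadraticCharIn_mulShift _ hi, ← mul_assoc,
    ← sq, hη, one_mul]

lemma isSquare_residue_ig_intCast {a : ℤ} (ha : Odd a) [Fact (Prime (a : GaussianInt))]
    (hchar : ringChar (Residue (a : GaussianInt)) ≠ 2) :
    IsSquare (residue (a : GaussianInt) ig) := by
  have hcard : (a * a).natAbs / 2 % 4 = 0 := by
    have hsq := Int.eight_dvd_sq_sub_one_of_odd ha
    have hnonneg := mul_self_nonneg a
    rw [sq] at hsq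
    omega
  obtain ⟨c, hc⟩ := Nat.dvd_of_mod_eq_zero hcard
  rw [FiniteField.isSquare_iff hchar (residue_ig_ne_zero _), card_residue, Zsqrtd.norm_intCast, hc,
    pow_mul, ← map_pow, show ig ^ 4 = 1 by decide, map_one, one_pow]

theorem gaussSum_residueChar {ϖ : GaussianInt} [hp : Fact (Prime ϖ)] (h : 2 ∣ ϖ - 1) :
    gaussSum (quadraticCharIn (Residue ϖ) ℂ) (residueChar ϖ) =
      quadraticCharIn (Residue ϖ) ℂ (residue ϖ ig) * (√(Nm ϖ) : ℝ) := by
  have hodd := (odd_re_and_even_im h).1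
  rcases eq_or_ne ϖ.im 0 with him | him
  · obtain ⟨a, rfl⟩ : ∃ a : ℤ, ϖ = a := ⟨ϖ.re, by ext <;> simp [him]⟩
    rw [Zsqrtd.re_intCast] at hodd
    have hchar := ringChar_residue_ne_two h
    have hψ := AddChar.mulShift_one (residueChar (a : GaussianInt)) ▸
      isPrimitive_residueChar hp.out.ne_zero one_ne_zero
    rw [gaussSum_quadraticCharIn_eq_sum_sq hchar hψ, sum_residueChar_sq_intCast hodd,
      quadraticCharIn_eq_one_of_isSquare (residue_ig_ne_zero _)
        (isSquare_residue_ig_intCast hodd hchar), one_mul, Nm, Zsqrtd.norm_intCast,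
      Int.cast_mul, Real.sqrt_mul_self_eq_abs, ← Int.cast_abs, ← Nat.cast_natAbs, ofReal_natCast]
  · have hre : ϖ.re ≠ 0 := fun h0 ↦ by simp [h0] at hodd
    exact gaussSum_residueChar_of_isCoprime h
      (isCoprime_re_im_of_irreducible hp.out.irreducible hre him)

end OddPrimes

section QuadraticSymbol

variable {χ : GaussianInt → GaussianInt → ℤ}

lemma IsQuadSym.eq_quadraticCharIn (hχ : IsQuadSym χ) {ϖ : GaussianInt} [hϖ : Fact (Prime ϖ)]
    (h : 2 ∣ ϖ - 1) (a : GaussianInt) :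
    (χ a ϖ : ℂ) = quadraticCharIn (Residue ϖ) ℂ (residue ϖ a) := by
  rw [quadraticCharIn, MulChar.ringHomComp_apply, eq_intCast, Int.cast_inj]
  by_cases hdvd : ϖ ∣ a
  · rw [hχ.zero_of_dvd ϖ a hϖ.out hdvd, residue_eq_zero_iff.mpr hdvd, quadraticChar_zero]
  have hchar := ringChar_residue_ne_two h
  have hexp : (ϖ.norm.toNat - 1) / 2 = Fintype.card (Residue ϖ) / 2 := by
    have hmod := natAbs_norm_mod_four_eq_one h
    have hnonneg := GaussianInt.norm_nonneg ϖ
    rw [card_residue]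
    omega
  have hres : residue ϖ a ≠ 0 := fun h0 ↦ hdvd (residue_eq_zero_iff.mp h0)
  obtain ⟨hsign, heuler⟩ := hχ.val_prime ϖ a hϖ.out (not_ωg_dvd h) hdvd
  rw [← residue_eq_residue_iff, map_pow, map_intCast, hexp,
    ← quadraticChar_eq_pow_of_char_ne_two' hchar] at heuler
  have hne := Ring.neg_one_ne_one_of_char_ne_two hchar
  rcases quadraticChar_dichotomy hres with hη | hη <;>
    rcases hsign with hs | hs <;> rw [hη, hs] at heuler ⊢ <;> push_cast at heuler
  · exact absurd heuler.symm hne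
  · exact absurd heuler hne

lemma IsQuadSym.pow_den (hχ : IsQuadSym χ) {n : GaussianInt} (hn : 2 ∣ n - 1) (a : GaussianInt)
    (l : ℕ) : χ a (n ^ l) = χ a n ^ l := by
  induction l with
  | zero => rw [pow_zero, pow_zero, hχ.unit_den a 1 isUnit_one]
  | succ l ih =>
    have hpow : 2 ∣ n ^ l - 1 := hn.trans (sub_one_dvd_pow_sub_one n l)
    rw [pow_succ, pow_succ, hχ.mul_den a _ _ (not_ωg_dvd hpow) (not_ωg_dvd hn), ih]

end QuadraticSymbol

section PrimePowers

section Reduction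

variable {n m d : GaussianInt} [NeZero n] [NeZero d] (hn : n = m * d)
  [IsLocalHom (residueReduction (Dvd.intro_left m hn.symm))] (X : MulChar (Residue d) ℂ)

lemma gaussSum_mulCharPullback_of_not_dvd {k : GaussianInt} (hk : ¬ m ∣ k) :
    gaussSum (mulCharPullback (residueReduction (Dvd.intro_left m hn.symm)) X)
      ((residueChar n).mulShift (residue n k)) = 0 := by
  have hkd : residue n (k * d) ≠ 0 := by
    rw [Ne, residue_eq_zero_iff, hn, mul_dvd_mul_iff_right (NeZero.ne d)]
    exact hk
  obtain ⟨y, hy⟩ := AddChar.ne_one_iff.mp (isPrimitive_residueChar (NeZero.ne n) hkd)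
  have hred : residueReduction (Dvd.intro_left m hn.symm) (residue n d * y) = 0 := by
    rw [map_mul, Ideal.Quotient.factor_mk, residue_eq_zero_iff.mpr dvd_rfl, zero_mul]
  refine sum_mul_addChar_eq_zero_of_translation_invariant (s := residue n d * y) (fun x ↦ ?_) ?_
  · rw [mulCharPullback_apply, mulCharPullback_apply, map_add, hred, add_zero]
  · rwa [AddChar.mulShift_apply, ← mul_assoc, ← map_mul, ← AddChar.mulShift_apply]

lemma gaussSum_mulCharPullback_mulShift_mul (k : GaussianInt) :
    gaussSum (mulCharPullback (residueReduction (Dvd.intro_left m hn.symm)) X)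
      ((residueChar n).mulShift (residue n (m * k))) =
      Nm m * gaussSum X ((residueChar d).mulShift (residue d k)) := by
  have hm : m ≠ 0 := fun hm ↦ NeZero.ne n (by rw [hn, hm, zero_mul])
  rw [residueChar_mulShift_mul hm hn, gaussSum_mulCharPullback (residueReduction_surjective _),
    natCard_ker_residueReduction hn, Nm, ← GaussianInt.natCast_natAbs_norm, ofReal_natCast]

end Reduction

lemma Nm_pow (n : GaussianInt) (m : ℕ) : Nm (n ^ m) = Nm n ^ m := by
  rw [Nm, Nm, ← Int.cast_pow]
  exact congrArg Int.cast (map_pow Zsqrtd.normMonoidHom n m)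

instance {ϖ : GaussianInt} [hϖ : Fact (Prime ϖ)] {l : ℕ} (h : ϖ ∣ ϖ ^ l) :
    IsLocalHom (residueReduction h) where
  map_nonunit q hq := by
    obtain ⟨x, rfl⟩ := residue_surjective _ q
    rw [Ideal.Quotient.factor_mk] at hq
    have hx : ¬ ϖ ∣ x := fun hx ↦ hq.ne_zero (residue_eq_zero_iff.mpr hx)
    obtain ⟨a, b, hab⟩ := (hϖ.out.irreducible.coprime_iff_not_dvd.mpr hx).pow_left (m := l)
    refine .of_mul_eq_one (residue _ b) ?_
    rw [← map_mul, ← map_one (residue _), residue_eq_residue_iff]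
    exact ⟨-a, by linear_combination hab⟩

variable {χ : GaussianInt → GaussianInt → ℤ} {g : GaussianInt → GaussianInt → ℂ}
  {ϖ : GaussianInt} [hϖ : Fact (Prime ϖ)]

lemma IsGaussSum.prime_pow_eq_gaussSum (hg : IsGaussSum χ g) (hχ : IsQuadSym χ) (h : 2 ∣ ϖ - 1)
    {l : ℕ} (hl : l ≠ 0) (k : GaussianInt) :
    g k (ϖ ^ l) = gaussSum (mulCharPullback (residueReduction (dvd_pow_self ϖ hl))
      (quadraticCharIn (Residue ϖ) ℂ ^ l)) ((residueChar (ϖ ^ l)).mulShift (residue _ k)) := by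
  refine hg.eq_gaussSum (fun x ↦ ?_) k
  rw [mulCharPullback_apply, Ideal.Quotient.factor_mk, MulChar.pow_apply' _ hl,
    ← hχ.eq_quadraticCharIn h, hχ.pow_den h, Int.cast_pow]

lemma IsGaussSum.prime_pow_of_odd_of_dvd (hg : IsGaussSum χ g) (hχ : IsQuadSym χ)
    (h : 2 ∣ ϖ - 1) {l : ℕ} (hl : Odd l) {k : GaussianInt} (hk : ϖ ^ l ∣ k) :
    g k (ϖ ^ l) = 0 := by
  have hη : quadraticCharIn (Residue ϖ) ℂ ^ l ≠ 1 := by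
    rw [quadraticCharIn_isQuadratic.pow_odd hl]
    exact quadraticCharIn_ne_one (ringChar_residue_ne_two h)
  rw [hg.prime_pow_eq_gaussSum hχ h hl.pos.ne', residue_eq_zero_iff.mpr hk, AddChar.mulShift_zero,
    gaussSum_one_right (mulCharPullback_ne_one (residueReduction_surjective _) hη)]

lemma IsGaussSum.prime_pow_of_even_of_dvd (hg : IsGaussSum χ g) (hχ : IsQuadSym χ)
    (h : 2 ∣ ϖ - 1) {l : ℕ} (hl : Even l) (hl0 : l ≠ 0) {k : GaussianInt} (hk : ϖ ^ l ∣ k) :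
    g k (ϖ ^ l) = phiG (ϖ ^ l) := by
  rw [hg.prime_pow_eq_gaussSum hχ h hl0, residue_eq_zero_iff.mpr hk, AddChar.mulShift_zero,
    quadraticCharIn_isQuadratic.pow_even hl, mulCharPullback_one, gaussSum_one_one, phiG,
    Nat.card_eq_fintype_card]

lemma IsGaussSum.prime_pow_succ_of_not_dvd (hg : IsGaussSum χ g) (hχ : IsQuadSym χ) (h : 2 ∣ ϖ - 1)
    {m : ℕ} {k : GaussianInt} (hk : ¬ ϖ ^ m ∣ k) : g k (ϖ ^ (m + 1)) = 0 := by
  rw [hg.prime_pow_eq_gaussSum hχ h m.succ_ne_zero,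
    gaussSum_mulCharPullback_of_not_dvd (pow_succ ϖ m) _ hk]

lemma IsGaussSum.pow_mul_prime_pow_succ_of_even (hg : IsGaussSum χ g) (hχ : IsQuadSym χ)
    (h : 2 ∣ ϖ - 1) {m : ℕ} (hm : Even (m + 1)) {k : GaussianInt} (hk : ¬ ϖ ∣ k) :
    g (ϖ ^ m * k) (ϖ ^ (m + 1)) = -(Nm ϖ ^ m : ℝ) := by
  have hψ : (residueChar ϖ).mulShift (residue ϖ k) ≠ 1 :=
    isPrimitive_residueChar hϖ.out.ne_zero fun h0 ↦ hk (residue_eq_zero_iff.mp h0)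
  rw [hg.prime_pow_eq_gaussSum hχ h m.succ_ne_zero,
    gaussSum_mulCharPullback_mulShift_mul (pow_succ ϖ m), quadraticCharIn_isQuadratic.pow_even hm,
    gaussSum_one_left hψ, Nm_pow, mul_neg_one]

lemma IsGaussSum.pow_mul_prime_pow_succ_of_odd (hg : IsGaussSum χ g) (hχ : IsQuadSym χ)
    (h : 2 ∣ ϖ - 1) {m : ℕ} (hm : Odd (m + 1)) {k : GaussianInt} (hk : ¬ ϖ ∣ k) :
    g (ϖ ^ m * k) (ϖ ^ (m + 1)) = χ (ig * k) ϖ * (Nm ϖ ^ (((m + 1 : ℕ) : ℝ) - 1 / 2) : ℝ) := by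
  have hNm : 0 < Nm ϖ := Int.cast_pos.mpr (GaussianInt.norm_pos.mpr hϖ.out.ne_zero)
  have hexp : ((m + 1 : ℕ) : ℝ) - 1 / 2 = m + 1 / 2 := by
    push_cast
    ring
  have hk0 : residue ϖ k ≠ 0 := fun h0 ↦ hk (residue_eq_zero_iff.mp h0)
  rw [hg.prime_pow_eq_gaussSum hχ h m.succ_ne_zero,
    gaussSum_mulCharPullback_mulShift_mul (pow_succ ϖ m), quadraticCharIn_isQuadratic.pow_odd hm,
    gaussSum_quadraticCharIn_mulShift _ hk0, gaussSum_residueChar h, hχ.eq_quadraticCharIn h,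
    map_mul, map_mul, Nm_pow, hexp, Real.rpow_add hNm, Real.rpow_natCast, ← Real.sqrt_eq_rpow,
    ofReal_mul]
  ring

end PrimePowers

theorem gauss_sum_prime_power_general
    (χ : GaussianInt → GaussianInt → ℤ) (hχ : IsQuadSym χ)
    (g : GaussianInt → GaussianInt → ℂ) (hg : IsGaussSum χ g)
    (ϖ : GaussianInt) (hp : Prime ϖ) (htwo : 2 ∣ ϖ - 1) :
    (∀ k : GaussianInt, ∀ h : ℕ, ϖ ^ h ∣ k → ¬ ϖ ^ (h + 1) ∣ k →
      ∀ l : ℕ, 1 ≤ l →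
        (l ≤ h → Odd l → g k (ϖ ^ l) = 0) ∧
        (l ≤ h → Even l → g k (ϖ ^ l) = (phiG (ϖ ^ l) : ℂ)) ∧
        (l = h + 1 → Even l → g k (ϖ ^ l) = -((Nm ϖ ^ (l - 1) : ℝ) : ℂ)) ∧
        (l = h + 1 → Odd l → g k (ϖ ^ l) =
          (χ (ig * (k / ϖ ^ h)) ϖ : ℂ) * ((Nm ϖ ^ ((l : ℝ) - 1 / 2) : ℝ) : ℂ)) ∧
        (h + 2 ≤ l → g k (ϖ ^ l) = 0)) ∧
    (∀ l : ℕ, 1 ≤ l →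
      (Odd l → g 0 (ϖ ^ l) = 0) ∧ (Even l → g 0 (ϖ ^ l) = (phiG (ϖ ^ l) : ℂ))) := by
  have : Fact (Prime ϖ) := ⟨hp⟩
  refine ⟨fun k h hdvd hndvd l hl ↦ ?_, fun l hl ↦ ⟨fun hodd ↦ ?_, fun heven ↦ ?_⟩⟩
  · have hϖh : ϖ ^ h ≠ 0 := pow_ne_zero h hp.ne_zero
    obtain ⟨k', rfl⟩ := hdvd
    have hk' : ¬ ϖ ∣ k' := by rwa [pow_succ, mul_dvd_mul_iff_left hϖh] at hndvd
    have hdvd {l : ℕ} (hlh : l ≤ h) : ϖ ^ l ∣ ϖ ^ h * k' := (pow_dvd_pow ϖ hlh).mul_right k'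
    rw [mul_div_cancel_left₀ k' hϖh]
    refine ⟨fun hlh hodd ↦ hg.prime_pow_of_odd_of_dvd hχ htwo hodd (hdvd hlh),
      fun hlh heven ↦ hg.prime_pow_of_even_of_dvd hχ htwo heven (by omega) (hdvd hlh),
      ?_, ?_, fun hlh ↦ ?_⟩
    · rintro rfl heven
      exact hg.pow_mul_prime_pow_succ_of_even hχ htwo heven hk'
    · rintro rfl hodd
      exact hg.pow_mul_prime_pow_succ_of_odd hχ htwo hodd hk'
    · obtain ⟨m, rfl⟩ : ∃ m, l = m + 1 := ⟨l - 1, by omega⟩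
      exact hg.prime_pow_succ_of_not_dvd hχ htwo fun hm ↦
        hndvd ((pow_dvd_pow ϖ (by omega)).trans hm)
  · exact hg.prime_pow_of_odd_of_dvd hχ htwo hodd (dvd_zero _)
  · exact hg.prime_pow_of_even_of_dvd hχ htwo heven (by omega) (dvd_zero _)

/-- explicit evaluation of the quadratic Gauss sum `g(k, ϖ^l)` at powers of a
primary prime `ϖ` (Lemma 2.1 (ii) of the paper).  Here `h` is the exact power of `ϖ`
dividing `k` (the second clause treats `k = 0`, i.e. `h = ∞`). -/
theorem gauss_sum_prime_power
    (χ : GaussianInt → GaussianInt → ℤ) (hχ : IsQuadSym χ)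
    (g : GaussianInt → GaussianInt → ℂ) (hg : IsGaussSum χ g)
    (ϖ : GaussianInt) (hp : Prime ϖ) (hprim : IsPrimary ϖ) :
    (∀ k : GaussianInt, k ≠ 0 → ∀ h : ℕ, ϖ ^ h ∣ k → ¬ ϖ ^ (h + 1) ∣ k →
      ∀ l : ℕ, 1 ≤ l →
        (l ≤ h → Odd l → g k (ϖ ^ l) = 0) ∧
        (l ≤ h → Even l → g k (ϖ ^ l) = (phiG (ϖ ^ l) : ℂ)) ∧
        (l = h + 1 → Even l → g k (ϖ ^ l) = -((Nm ϖ ^ (l - 1) : ℝ) : ℂ)) ∧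
        (l = h + 1 → Odd l → g k (ϖ ^ l) =
          (χ (ig * (k / ϖ ^ h)) ϖ : ℂ) * ((Nm ϖ ^ ((l : ℝ) - 1 / 2) : ℝ) : ℂ)) ∧
        (h + 2 ≤ l → g k (ϖ ^ l) = 0)) ∧
    (∀ l : ℕ, 1 ≤ l →
      (Odd l → g 0 (ϖ ^ l) = 0) ∧ (Even l → g 0 (ϖ ^ l) = (phiG (ϖ ^ l) : ℂ))) := by
  obtain ⟨hne, hzero⟩ := gauss_sum_prime_power_general χ hχ g hg ϖ hp
    (two_dvd_sub_one_of_isPrimary hprim)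
  exact ⟨fun k _ ↦ hne k, hzero⟩
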